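/- Let f₁, c ∈ ℝ, γ ≥ 0, and let μ be a positive Borel measure on [0, ∞) with ∫_{[0,∞)} (1 + λ)^{-1} dμ(λ) < ∞. Define F(z) := f₁ + c(z − 1) + γ(z − 1)² + ∫_{[0,∞)} (z − 1)²/(z + λ) dμ(λ) for complex z with Re z > 0. If Re F(z) ≥ 0 for every z ∈ ℂ with Re z > 0, then γ = 0, ∫_{[0,∞)} (1 + λ) dμ(λ) ≤ f₁ < ∞, and there exist α ≥ 0 and β ≥ 0 such that F(x) = α + βx + ∫_{[0,∞)} (1 + λ)²/(x + λ) dμ(λ) for all real x > 0. -/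

import Mathlib

open MeasureTheory

/-- The analytic function
`F(z) = f₁ + c(z−1) + γ(z−1)² + ∫_{[0,∞)} (z−1)²/(z+λ) dμ(λ)` on `{Re z > 0}`. -/
noncomputable def Ffun (f₁ c γ : ℝ) (μ : Measure ℝ) (z : ℂ) : ℂ :=
  (f₁ : ℂ) + (c : ℂ) * (z - 1) + (γ : ℂ) * (z - 1) ^ 2 +
    ∫ l, (z - 1) ^ 2 / (z + (l : ℂ)) ∂μ

open Filter Topology

lemma norm_lb (z : ℂ) (δ l : ℝ) (h1 : δ ≤ 1) (hz : δ ≤ z.re) (hl : 0 ≤ l) :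
    δ * (1 + l) ≤ ‖z + (l : ℂ)‖ := by
  have h := Complex.re_le_norm (z + (l : ℂ))
  simp only [Complex.add_re, Complex.ofReal_re] at h
  nlinarith

lemma ptwise (z : ℂ) (l : ℝ) (hz : 0 < z.re) (hl : 0 ≤ l) :
    (z - 1) ^ 2 / (z + (l : ℂ)) = z - (2 + (l : ℂ)) + (1 + (l : ℂ)) ^ 2 / (z + l) := by
  have hne : z + (l : ℂ) ≠ 0 := by
    intro h
    have := congrArg Complex.re h
    simp at this
    linarith
  field_simp
  ring

lemma int1 (μ : Measure ℝ) (h0 : ∀ᵐ l ∂μ, 0 ≤ l)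
    (hμint : Integrable (fun l : ℝ => (1 + l)⁻¹) μ) (z w : ℂ) (hz : 1 ≤ z.re) :
    Integrable (fun l : ℝ => w / (z + (l : ℂ))) μ := by
  refine (hμint.const_mul ‖w‖).mono' (Measurable.aestronglyMeasurable (by fun_prop)) ?_
  filter_upwards [h0] with l hl
  rw [norm_div, div_eq_mul_inv]
  have := norm_lb z 1 l le_rfl hz hl
  gcongr
  linarith

lemma bnd2 (z : ℂ) (δ l : ℝ) (hδ : 0 < δ) (h1 : δ ≤ 1) (hz : δ ≤ z.re) (hl : 0 ≤ l) :
    ‖(1 + (l : ℂ)) ^ 2 / (z + l)‖ ≤ δ⁻¹ * (1 + l) := by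
  have := norm_lb z δ l h1 hz hl
  have e : ‖(1 + (l : ℂ))‖ = 1 + l := by
    rw [show (1 + (l : ℂ)) = ((1 + l : ℝ) : ℂ) by push_cast; rfl, Complex.norm_real,
      Real.norm_of_nonneg (by linarith)]
  rw [norm_div, norm_pow, e]
  have hp : 0 < δ * (1 + l) := by positivity
  rw [div_le_iff₀ (by linarith)]
  calc (1 + l) ^ 2 = δ⁻¹ * (1 + l) * (δ * (1 + l)) := by field_simp
    _ ≤ _ := by gcongr

lemma int2 (μ : Measure ℝ) (h0 : ∀ᵐ l ∂μ, 0 ≤ l)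
    (hi : Integrable (fun l : ℝ => 1 + l) μ) (z : ℂ) (hz : 0 < z.re) :
    Integrable (fun l : ℝ => (1 + (l : ℂ)) ^ 2 / (z + (l : ℂ))) μ := by
  refine (hi.const_mul (min z.re 1)⁻¹).mono'
    (Measurable.aestronglyMeasurable (by fun_prop)) ?_
  filter_upwards [h0] with l hl
  exact bnd2 z _ l (by positivity) (min_le_right _ _) (min_le_left _ _) hl

lemma lim2 (μ : Measure ℝ) (h0 : ∀ᵐ l ∂μ, 0 ≤ l)
    (hi : Integrable (fun l : ℝ => 1 + l) μ) (δ : ℝ) (hδ : 0 < δ) (h1 : δ ≤ 1)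
    (z : ℕ → ℂ) (hz : ∀ n, δ ≤ (z n).re) (hlim : Tendsto (fun n => ‖z n‖) atTop atTop) :
    Tendsto (fun n => ∫ l : ℝ, (1 + (l : ℂ)) ^ 2 / (z n + (l : ℂ)) ∂μ) atTop (𝓝 0) := by
  rw [show (0 : ℂ) = ∫ l : ℝ, (0 : ℂ) ∂μ by simp]
  refine tendsto_integral_of_dominated_convergence (fun l => δ⁻¹ * (1 + l))
    (fun n => Measurable.aestronglyMeasurable (by fun_prop)) (hi.const_mul _) ?_ ?_
  · intro n
    filter_upwards [h0] with l hl
    exact bnd2 _ δ l hδ h1 (hz n) hl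
  · refine Eventually.of_forall fun l => ?_
    have h2 : Tendsto (fun n => z n + (l : ℂ)) atTop (Bornology.cobounded ℂ) := by
      rw [← tendsto_norm_atTop_iff_cobounded]
      refine tendsto_atTop_mono (f := fun n => ‖z n‖ + -‖(l : ℂ)‖) (fun n => ?_)
        (tendsto_atTop_add_const_right _ _ hlim)
      have := norm_sub_le (z n + (l : ℂ)) l
      simp only [add_sub_cancel_right] at this
      linarith
    have h3 := (tendsto_inv₀_cobounded.comp h2).const_mul ((1 + (l : ℂ)) ^ 2)
    simpa [div_eq_mul_inv] using h3

lemma key1 (f₁ c γ : ℝ) (μ : Measure ℝ) (h0 : ∀ᵐ l ∂μ, 0 ≤ l)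
    (hμint : Integrable (fun l : ℝ => (1 + l)⁻¹) μ)
    (hpos : ∀ z : ℂ, 0 < z.re → 0 ≤ (Ffun f₁ c γ μ z).re) (y : ℝ) :
    Integrable (fun l : ℝ => y ^ 2 * (1 + l) / ((1 + l) ^ 2 + y ^ 2)) μ ∧
    γ * y ^ 2 + ∫ l : ℝ, y ^ 2 * (1 + l) / ((1 + l) ^ 2 + y ^ 2) ∂μ ≤ f₁ := by
  set z : ℂ := ⟨1, y⟩ with hzdef
  have hz1 : z - 1 = ⟨0, y⟩ := by apply Complex.ext <;> simp [z]
  have hI := int1 μ h0 hμint z ((z - 1) ^ 2) (by simp [z])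
  have hre : ∀ l : ℝ, ((z - 1) ^ 2 / (z + (l : ℂ))).re
      = -(y ^ 2 * (1 + l) / ((1 + l) ^ 2 + y ^ 2)) := by
    intro l
    rw [hz1, Complex.div_re]
    simp [z, pow_two, Complex.normSq_apply, neg_div]
  have hI2 := hI.re
  simp only [RCLike.re_eq_complex_re, hre] at hI2
  have h := hpos z (by simp [z])
  have hint : (∫ l : ℝ, (z - 1) ^ 2 / (z + (l : ℂ)) ∂μ).re
      = ∫ l : ℝ, -(y ^ 2 * (1 + l) / ((1 + l) ^ 2 + y ^ 2)) ∂μ := by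
    have := integral_re hI
    simp only [RCLike.re_eq_complex_re, hre] at this
    exact this.symm
  refine ⟨by simpa using hI2.neg, ?_⟩
  unfold Ffun at h
  rw [Complex.add_re, hint, hz1, integral_neg] at h
  simp [pow_two] at h
  simp only [pow_two]
  linarith

theorem stmt17 (f₁ c γ : ℝ) (hγ : 0 ≤ γ) (μ : Measure ℝ)
    (hμs : μ (Set.Ici (0 : ℝ))ᶜ = 0)
    (hμint : Integrable (fun l : ℝ => (1 + l)⁻¹) μ)
    (hpos : ∀ z : ℂ, 0 < z.re → 0 ≤ (Ffun f₁ c γ μ z).re) :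
    γ = 0 ∧
    (∫⁻ l, ENNReal.ofReal (1 + l) ∂μ) ≤ ENNReal.ofReal f₁ ∧
    ∃ α β : ℝ, 0 ≤ α ∧ 0 ≤ β ∧
      ∀ x : ℝ, 0 < x →
        Ffun f₁ c γ μ (x : ℂ) =
          (α : ℂ) + (β : ℂ) * (x : ℂ) +
            ∫ l, ((1 : ℂ) + (l : ℂ)) ^ 2 / ((x : ℂ) + (l : ℂ)) ∂μ := by
  have h0 : ∀ᵐ l ∂μ, 0 ≤ l := by
    rw [ae_iff]
    exact hμs
  have hk := key1 f₁ c γ μ h0 hμint hpos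
  have hnn : ∀ y : ℝ, 0 ≤ᵐ[μ] (fun l : ℝ => y ^ 2 * (1 + l) / ((1 + l) ^ 2 + y ^ 2)) := by
    intro y
    filter_upwards [h0] with l hl
    simp only [Pi.zero_apply]
    positivity
  have hγ0 : γ = 0 := by
    by_contra hne
    have hγp : 0 < γ := lt_of_le_of_ne hγ (Ne.symm hne)
    have h1 := (hk (Real.sqrt ((|f₁| + 1) / γ))).2
    have h2 := integral_nonneg_of_ae (hnn (Real.sqrt ((|f₁| + 1) / γ)))
    rw [Real.sq_sqrt (by positivity)] at h1 h2
    rw [mul_div_cancel₀ _ hne] at h1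
    linarith [le_abs_self f₁]
  have hf : (∫⁻ l, ENNReal.ofReal (1 + l) ∂μ) ≤ ENNReal.ofReal f₁ := by
    have hle : ∀ n : ℕ, ∫⁻ l : ℝ, ENNReal.ofReal
        ((n : ℝ) ^ 2 * (1 + l) / ((1 + l) ^ 2 + (n : ℝ) ^ 2)) ∂μ ≤ ENNReal.ofReal f₁ := by
      intro n
      rw [← ofReal_integral_eq_lintegral_ofReal (hk n).1 (hnn n)]
      apply ENNReal.ofReal_le_ofReal
      have := (hk n).2
      rw [hγ0] at this
      linarith
    have hlim : ∀ l : ℝ, Tendsto (fun n : ℕ => ENNReal.ofReal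
        ((n : ℝ) ^ 2 * (1 + l) / ((1 + l) ^ 2 + (n : ℝ) ^ 2))) atTop
        (𝓝 (ENNReal.ofReal (1 + l))) := by
      intro l
      apply ENNReal.tendsto_ofReal
      have hi : Tendsto (fun n : ℕ => ((n : ℝ))⁻¹) atTop (𝓝 0) :=
        tendsto_inv_atTop_zero.comp tendsto_natCast_atTop_atTop
      have h3 : Tendsto (fun n : ℕ => (1 + l) / (((1 + l) * ((n : ℝ))⁻¹) ^ 2 + 1)) atTop
          (𝓝 ((1 + l) / (((1 + l) * 0) ^ 2 + 1))) :=
        Tendsto.div tendsto_const_nhds (((hi.const_mul _).pow 2).add_const 1) (by norm_num)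
      simp only [mul_zero, ne_eq, OfNat.ofNat_ne_zero, not_false_eq_true, zero_pow, zero_add,
        div_one] at h3
      refine h3.congr' ?_
      filter_upwards [eventually_gt_atTop 0] with n hn
      have : (0 : ℝ) < n := by exact_mod_cast hn
      field_simp
    calc (∫⁻ l, ENNReal.ofReal (1 + l) ∂μ)
        = ∫⁻ l, liminf (fun n : ℕ => ENNReal.ofReal
          ((n : ℝ) ^ 2 * (1 + l) / ((1 + l) ^ 2 + (n : ℝ) ^ 2))) atTop ∂μ :=
          lintegral_congr fun l => (hlim l).liminf_eq.symm
      _ ≤ liminf (fun n : ℕ => ∫⁻ l, ENNReal.ofReal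
          ((n : ℝ) ^ 2 * (1 + l) / ((1 + l) ^ 2 + (n : ℝ) ^ 2)) ∂μ) atTop :=
          lintegral_liminf_le fun n => by fun_prop
      _ ≤ ENNReal.ofReal f₁ :=
          (liminf_le_liminf (Eventually.of_forall hle)).trans (by simp)
  refine ⟨hγ0, hf, ?_⟩
  have hi : Integrable (fun l : ℝ => 1 + l) μ := by
    refine ⟨by fun_prop, ?_⟩
    rw [hasFiniteIntegral_iff_ofReal (by filter_upwards [h0] with l hl; simp; linarith)]
    exact hf.trans_lt ENNReal.ofReal_lt_top
  have hone : Integrable (fun _ : ℝ => (1 : ℝ)) μ := by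
    refine hi.mono' (by fun_prop) ?_
    filter_upwards [h0] with l hl
    simp [hl]
  have hone' : Integrable (fun l : ℝ => 2 + l) μ := by
    refine (hone.add hi).congr (Eventually.of_forall fun l => ?_)
    show 1 + (1 + l) = 2 + l
    ring
  set m := ∫ _ : ℝ, (1 : ℝ) ∂μ with hm
  set k := ∫ l : ℝ, (2 + l) ∂μ with hkdef
  have hF : ∀ z : ℂ, 0 < z.re → Ffun f₁ c γ μ z = ((f₁ - c - k : ℝ) : ℂ) + ((c + m : ℝ) : ℂ) * z
      + ∫ l : ℝ, ((1 : ℂ) + (l : ℂ)) ^ 2 / (z + (l : ℂ)) ∂μ := by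
    intro z hz
    have e : ∫ l : ℝ, (z - 1) ^ 2 / (z + (l : ℂ)) ∂μ = ∫ l : ℝ,
        ((((1 : ℝ) : ℂ) * z - ((2 + l : ℝ) : ℂ)) + (1 + (l : ℂ)) ^ 2 / (z + l)) ∂μ := by
      apply integral_congr_ae
      filter_upwards [h0] with l hl
      rw [ptwise z l hz hl]
      push_cast
      ring
    have i1 : Integrable (fun _ : ℝ => ((1 : ℝ) : ℂ) * z) μ := hone.ofReal.mul_const z
    have i2 : Integrable (fun l : ℝ => ((2 + l : ℝ) : ℂ)) μ := hone'.ofReal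
    have i3 : Integrable (fun l : ℝ => ((1 : ℝ) : ℂ) * z - ((2 + l : ℝ) : ℂ)) μ := i1.sub i2
    unfold Ffun
    rw [e, integral_add i3 (int2 μ h0 hi z hz), integral_sub i1 i2,
      integral_mul_const, integral_complex_ofReal, integral_complex_ofReal, ← hm, ← hkdef, hγ0]
    push_cast
    ring
  refine ⟨f₁ - c - k, c + m, ?_, ?_, fun x hx => hF x (by simpa using hx)⟩
  · have hx : ∀ x : ℝ, 0 < x → x ≤ 1 → 0 ≤ (f₁ - c - k) + (c + m) * x := by
      intro x hx hx1
      have hl := lim2 μ h0 hi x hx hx1 (fun n => ⟨x, n⟩) (fun n => le_rfl)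
        (tendsto_atTop_mono (fun n => (le_abs_self _).trans (Complex.abs_im_le_norm ⟨x, n⟩))
          tendsto_natCast_atTop_atTop)
      have hl2 := ((Complex.continuous_re.tendsto _).comp hl).const_add
        ((f₁ - c - k) + (c + m) * x)
      simp only [Complex.zero_re, add_zero] at hl2
      refine ge_of_tendsto' hl2 fun n => ?_
      have := hpos ⟨x, n⟩ hx
      rw [hF _ hx, Complex.add_re, Complex.add_re, Complex.re_ofReal_mul, Complex.ofReal_re] at this
      exact this
    have ht : Tendsto (fun x : ℝ => (f₁ - c - k) + (c + m) * x) (𝓝[>] 0)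
        (𝓝 ((f₁ - c - k) + (c + m) * 0)) :=
      (Continuous.tendsto (by fun_prop) 0).mono_left nhdsWithin_le_nhds
    rw [mul_zero, add_zero] at ht
    refine ge_of_tendsto ht ?_
    filter_upwards [Ioc_mem_nhdsGT (zero_lt_one' ℝ)] with x hx'
    exact hx x hx'.1 hx'.2
  · have hl := lim2 μ h0 hi 1 one_pos le_rfl (fun n => ⟨n + 1, 0⟩) (fun n => by simp)
        (tendsto_atTop_mono (f := fun n : ℕ => (n : ℝ)) (fun n => by
          have := Complex.re_le_norm ⟨(n : ℝ) + 1, 0⟩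
          simp only at this
          linarith)
          tendsto_natCast_atTop_atTop)
    have hinv : Tendsto (fun n : ℕ => ((n : ℝ) + 1)⁻¹) atTop (𝓝 0) := by
      simpa using tendsto_one_div_add_atTop_nhds_zero_nat (𝕜 := ℝ)
    have hl2 := ((((Complex.continuous_re.tendsto _).comp hl).const_add
        (f₁ - c - k)).mul hinv).const_add (c + m)
    simp only [mul_zero, add_zero] at hl2
    refine ge_of_tendsto' hl2 fun n => ?_
    have hp : (0 : ℝ) < (n : ℝ) + 1 := by positivity
    have := hpos ⟨n + 1, 0⟩ hp
    rw [hF _ hp, Complex.add_re, Complex.add_re, Complex.re_ofReal_mul, Complex.ofReal_re] at this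
    simp only [Function.comp]
    have h5 := mul_nonneg this (inv_nonneg.2 hp.le)
    refine h5.trans_eq ?_
    field_simp
    ring
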